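/- arXiv:2503.21678 — 3 statements merged into one kernel-verified Lean document; each statement's English description precedes it below -/
import Mathlib

section
/- Let I ⊆ ℝ be a nonempty open interval, p ∈ ℝ, n ∈ ℕ∪{0}, and μ a bounded signed Borel measure on [0,1]. Define J(p) := (−∞, (p − inf I)/(sup I − inf I)) if p ≤ inf I; J(p) := ℝ if p ∈ I; and J(p) := (1 + (p − sup I)/(sup I − inf I), ∞) if p ≥ sup I (these formulas interpreted appropriately when I is unbounded, in which case J(p) = (−∞,0), ℝ, (1,∞) respectively). Then the function f := φ_{p,n}, restricted to I, satisfies ∫_{[0,1]} f((1−t)x + t y) dμ(t) ≥ 0 for all x, y ∈ I with x < y if and only if μ_n(λ) ≥ 0 for all λ ∈ J(p). -/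
open MeasureTheory Set

/-- Integral of `f` over the set `A` with respect to the (automatically bounded) signed
Borel measure `μ`, defined via the Jordan decomposition. -/
noncomputable def sInt (μ : MeasureTheory.SignedMeasure ℝ) (A : Set ℝ) (f : ℝ → ℝ) : ℝ :=
  (∫ t in A, f t ∂μ.toJordanDecomposition.posPart) -
  (∫ t in A, f t ∂μ.toJordanDecomposition.negPart)

/-- `μ_k(τ) = ∫_{[0,1]} (t-τ)^k dμ(t)` (with the convention `0^0 = 1`). -/
noncomputable def muK (μ : MeasureTheory.SignedMeasure ℝ) (k : ℕ) (τ : ℝ) : ℝ :=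
  sInt μ (Icc 0 1) (fun t => (t - τ) ^ k)

/-- `μ_k^-(τ) = ∫_{[0,τ)} (t-τ)^k dμ(t)`. -/
noncomputable def muMinus (μ : MeasureTheory.SignedMeasure ℝ) (k : ℕ) (τ : ℝ) : ℝ :=
  sInt μ (Ico 0 τ) (fun t => (t - τ) ^ k)

/-- `μ_k^+(τ) = ∫_{(τ,1]} (t-τ)^k dμ(t)`. -/
noncomputable def muPlus (μ : MeasureTheory.SignedMeasure ℝ) (k : ℕ) (τ : ℝ) : ℝ :=
  sInt μ (Ioc τ 1) (fun t => (t - τ) ^ k)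

/-- The `n`th-order divided difference of `f` at the points `x 0, …, x n`. -/
noncomputable def divDiff (f : ℝ → ℝ) (n : ℕ) (x : Fin (n + 1) → ℝ) : ℝ :=
  ∑ j : Fin (n + 1), f (x j) / ∏ i ∈ Finset.univ.erase j, (x j - x i)

/-- `f` is `n`-increasing on `I`: all `n`th-order divided differences at pairwise
distinct points of `I` are nonnegative. -/
def nIncreasingOn (f : ℝ → ℝ) (I : Set ℝ) (n : ℕ) : Prop :=
  ∀ x : Fin (n + 1) → ℝ, Function.Injective x → (∀ j, x j ∈ I) → 0 ≤ divDiff f n x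

/-- `f` is `n`-decreasing on `I` if `-f` is `n`-increasing on `I`. -/
def nDecreasingOn (f : ℝ → ℝ) (I : Set ℝ) (n : ℕ) : Prop :=
  nIncreasingOn (fun u => -f u) I n

/-- `φ⁺_{p,n}(u) = ((u-p)_+)^n` for `n ≥ 1`, and `φ⁺_{p,0}` is the characteristic
function of `(p,∞)`. -/
noncomputable def phiPlus (p : ℝ) (n : ℕ) (u : ℝ) : ℝ :=
  if n = 0 then (if p < u then 1 else 0) else (max 0 (u - p)) ^ n

/-- `φ⁻_{p,n}(u) = ((u-p)_−)^n` for `n ≥ 1`, and `φ⁻_{p,0}` is the characteristic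
function of `(−∞,p)`. -/
noncomputable def phiMinus (p : ℝ) (n : ℕ) (u : ℝ) : ℝ :=
  if n = 0 then (if u < p then 1 else 0) else (max 0 (p - u)) ^ n

/- The set `J(p)` associated with an interval `I` and a point `p ∈ ℝ`:
`(−∞, (p − inf I)/(sup I − inf I))` if `p ≤ inf I` (interpreted as `(−∞,0)` when `I` is
unbounded above), `ℝ` if `p ∈ I`, and `(1 + (p − sup I)/(sup I − inf I), ∞)` if
`p ≥ sup I` (interpreted as `(1,∞)` when `I` is unbounded below). -/
open scoped Classical in
noncomputable def Jset (I : Set ℝ) (p : ℝ) : Set ℝ :=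
  if p ∈ I then Set.univ
  else if p ∈ lowerBounds I then
    (if BddAbove I then Set.Iio ((p - sInf I) / (sSup I - sInf I)) else Set.Iio 0)
  else
    (if BddBelow I then Set.Ioi (1 + (p - sSup I) / (sSup I - sInf I)) else Set.Ioi 1)

/-!
The affine map `t ↦ (1 - t) x + t y - p` has slope `y - x` and vanishes at the ratio `λ` in which
`p` divides `x` and `y`, so it equals `(y - x) (t - λ)`. The integrand is therefore
`(y - x) ^ n (t - λ) ^ n` (and any positively homogeneous function factors in the same way), so only
the set of ratios `λ` arising from `x < y` in `I` matters. That set is `J(p)`: for `p ∈ I` every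
ratio arises from points near `p`; for `p` to the left of `I` the ratio `λ` must be negative, and it
arises exactly when `(1 - λ) x + λ y ≤ p` for some `x, y ∈ I`; the case of `p` to the right of `I`
follows by reflection, which exchanges `λ` and `1 - λ`.
-/

section SInt

variable (μ : SignedMeasure ℝ) (A : Set ℝ)

lemma sInt_const_mul (c : ℝ) (f : ℝ → ℝ) :
    sInt μ A (fun t => c * f t) = c * sInt μ A f := by
  simp only [sInt, integral_const_mul, mul_sub]

lemma sInt_comp_affine_nonneg_iff {g : ℝ → ℝ} {x y p lam k : ℝ} (hk : 0 < k)
    (hg : ∀ u, g ((y - x) * u) = k * g u) (hp : (1 - lam) * x + lam * y = p) :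
    0 ≤ sInt μ A (fun t => g ((1 - t) * x + t * y - p)) ↔ 0 ≤ sInt μ A (fun t => g (t - lam)) := by
  have affine_eq (t : ℝ) : (1 - t) * x + t * y - p = (y - x) * (t - lam) := by
    rw [← hp]
    ring
  simp only [affine_eq, hg, sInt_const_mul, mul_nonneg_iff_of_pos_left hk]

end SInt

section OrderTopology

variable {α : Type*} [TopologicalSpace α] [LinearOrder α] [OrderTopology α] [DenselyOrdered α]
  {s : Set α} {a : α}

lemma subset_Ioi_of_isOpen_of_mem_lowerBounds [NoMinOrder α] (hs : IsOpen s)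
    (ha : a ∈ lowerBounds s) : s ⊆ Ioi a := by
  rw [← interior_Ici]
  exact interior_maximal ha hs

lemma subset_Iio_of_isOpen_of_mem_upperBounds [NoMaxOrder α] (hs : IsOpen s)
    (ha : a ∈ upperBounds s) : s ⊆ Iio a := by
  rw [← interior_Iic]
  exact interior_maximal ha hs

lemma sInf_lt_sSup_of_isOpen {β : Type*} [ConditionallyCompleteLinearOrder β]
    [TopologicalSpace β] [OrderTopology β] [DenselyOrdered β] [NoMinOrder β] {s : Set β}
    (hs : IsOpen s) (hne : s.Nonempty) (hbelow : BddBelow s) (habove : BddAbove s) :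
    sInf s < sSup s := by
  obtain ⟨z, hz⟩ := hne
  have inf_lt : sInf s < z :=
    subset_Ioi_of_isOpen_of_mem_lowerBounds hs (fun _ hx => csInf_le hbelow hx) hz
  exact inf_lt.trans_le (le_csSup habove hz)

end OrderTopology

lemma mem_upperBounds_of_notMem_of_notMem_lowerBounds {α : Type*} [LinearOrder α] {s : Set α}
    {a : α} (hs : s.OrdConnected) (ha : a ∉ s) (hlower : a ∉ lowerBounds s) :
    a ∈ upperBounds s := by
  obtain ⟨w, hw, hwa⟩ : ∃ w ∈ s, w < a := by
    simpa only [mem_lowerBounds, not_forall, not_le, exists_prop] using hlower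
  intro z hz
  by_contra! haz
  exact ha (hs.out hw hz ⟨hwa.le, haz.le⟩)

lemma neg_mem_lowerBounds_neg {G : Type*} [AddGroup G] [LE G] [AddLeftMono G] [AddRightMono G]
    {s : Set G} {a : G} (ha : a ∈ upperBounds s) : -a ∈ lowerBounds (-s) :=
  fun _ hx => neg_le.1 (ha hx)

/-- The ratios `λ` in which `p` divides a pair of points `x < y` of `I`, i.e. `p = (1 - λ) x + λ y`;
`p` may lie outside the segment `[x, y]`, so `λ` ranges over all of `ℝ`. This is the intrinsic
description of the set `J(p)`. -/
def divisionRatios (I : Set ℝ) (p : ℝ) : Set ℝ :=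
  {lam | ∃ x ∈ I, ∃ y ∈ I, x < y ∧ (1 - lam) * x + lam * y = p}

lemma exists_affineComb_eq {K : Type*} [Field K] {x y : K} (hxy : x ≠ y) (p : K) :
    ∃ lam : K, (1 - lam) * x + lam * y = p := by
  have : y - x ≠ 0 := sub_ne_zero.2 hxy.symm
  exact ⟨(p - x) / (y - x), by field_simp; ring⟩

section DivisionRatios

variable {I : Set ℝ} {p : ℝ}

lemma divisionRatios_eq_preimage_neg (I : Set ℝ) (p : ℝ) :
    divisionRatios I p = (fun lam => 1 - lam) ⁻¹' divisionRatios (-I) (-p) := by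
  ext lam
  constructor
  · rintro ⟨x, hx, y, hy, hxy, hp⟩
    exact ⟨-y, neg_mem_neg.2 hy, -x, neg_mem_neg.2 hx, neg_lt_neg hxy, by linear_combination -hp⟩
  · rintro ⟨x, hx, y, hy, hxy, hp⟩
    exact ⟨-y, hy, -x, hx, neg_lt_neg hxy, by linear_combination -hp⟩

lemma divisionRatios_eq_univ (hI : I ∈ nhds p) : divisionRatios I p = univ := by
  refine eq_univ_of_forall fun lam => ?_
  have near (c : ℝ) : ∀ᶠ h in nhdsWithin 0 (Ioi 0), p + c * h ∈ I := by
    have : ContinuousAt (fun h : ℝ => p + c * h) 0 := by fun_prop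
    exact nhdsWithin_le_nhds (this.eventually_mem (by simpa using hI))
  obtain ⟨h, hx, hy, h_pos⟩ :=
    ((near (-lam)).and ((near (1 - lam)).and self_mem_nhdsWithin)).exists
  replace h_pos : 0 < h := h_pos
  exact ⟨_, hx, _, hy, by linarith, by ring⟩

lemma mem_divisionRatios_iff_of_subset_Ioi (hIc : I.OrdConnected) (hp : I ⊆ Ioi p) {lam : ℝ} :
    lam ∈ divisionRatios I p ↔ lam < 0 ∧ ∃ x ∈ I, ∃ y ∈ I, (1 - lam) * x + lam * y ≤ p := by
  constructor
  · rintro ⟨x, hx, y, hy, hxy, h⟩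
    refine ⟨?_, x, hx, y, hy, h.le⟩
    have : lam * (y - x) < 0 := by linarith [mem_Ioi.1 (hp hx)]
    exact neg_of_mul_neg_left this (sub_pos.2 hxy).le
  · rintro ⟨hlam, x, hx, y, hy, h⟩
    have one_sub_pos : 0 < 1 - lam := by linarith
    -- Moving `x` right until the combination equals `p` keeps it between `x` and `y`.
    have le_left : x ≤ (p - lam * y) / (1 - lam) := by
      rw [le_div_iff₀ one_sub_pos]
      linarith
    have lt_right : (p - lam * y) / (1 - lam) < y := by
      rw [div_lt_iff₀ one_sub_pos]
      linarith [mem_Ioi.1 (hp hy)]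
    refine ⟨_, hIc.out hx hy ⟨le_left, lt_right.le⟩, y, hy, lt_right, ?_⟩
    field_simp
    ring

lemma divisionRatios_of_mem_lowerBounds_of_not_bddAbove (hIo : IsOpen I) (hIc : I.OrdConnected)
    (hIne : I.Nonempty) (hp : p ∈ lowerBounds I) (hI : ¬BddAbove I) :
    divisionRatios I p = Iio 0 := by
  ext lam
  rw [mem_divisionRatios_iff_of_subset_Ioi hIc (subset_Ioi_of_isOpen_of_mem_lowerBounds hIo hp),
    mem_Iio, and_iff_left_iff_imp]
  intro hlam
  obtain ⟨x, hx⟩ := hIne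
  obtain ⟨y, hy, h⟩ := not_bddAbove_iff.1 hI ((p - (1 - lam) * x) / lam)
  rw [div_lt_iff_of_neg hlam] at h
  exact ⟨x, hx, y, hy, by linarith⟩

-- `(1 - lam) * sInf I + lam * sSup I` is the infimum of the combinations since `lam < 0`,
-- and it is not attained because `I` is open.
lemma exists_affineComb_le_iff (hIo : IsOpen I) (hIne : I.Nonempty) (hbelow : BddBelow I)
    (habove : BddAbove I) {lam : ℝ} (hlam : lam < 0) :
    (∃ x ∈ I, ∃ y ∈ I, (1 - lam) * x + lam * y ≤ p) ↔
      (1 - lam) * sInf I + lam * sSup I < p := by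
  have one_sub_pos : 0 < 1 - lam := by linarith
  constructor
  · rintro ⟨x, hx, y, hy, h⟩
    have inf_lt : sInf I < x :=
      subset_Ioi_of_isOpen_of_mem_lowerBounds hIo (isGLB_csInf hIne hbelow).1 hx
    have lt_sup : y < sSup I :=
      subset_Iio_of_isOpen_of_mem_upperBounds hIo (isLUB_csSup hIne habove).1 hy
    calc (1 - lam) * sInf I + lam * sSup I
        < (1 - lam) * x + lam * y :=
          add_lt_add (mul_lt_mul_of_pos_left inf_lt one_sub_pos)
            (mul_lt_mul_of_neg_left lt_sup hlam)
      _ ≤ p := h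
  · intro h
    obtain ⟨x, hx, hxp⟩ : ∃ x ∈ I, x < (p - lam * sSup I) / (1 - lam) := by
      refine exists_lt_of_csInf_lt hIne ?_
      rw [lt_div_iff₀ one_sub_pos]
      linarith
    rw [lt_div_iff₀ one_sub_pos] at hxp
    obtain ⟨y, hy, hyp⟩ : ∃ y ∈ I, (p - (1 - lam) * x) / lam < y := by
      refine exists_lt_of_lt_csSup hIne ?_
      rw [div_lt_iff_of_neg hlam]
      linarith
    rw [div_lt_iff_of_neg hlam] at hyp
    exact ⟨x, hx, y, hy, by linarith⟩

lemma divisionRatios_of_mem_lowerBounds_of_bddAbove (hIo : IsOpen I) (hIc : I.OrdConnected)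
    (hIne : I.Nonempty) (hp : p ∈ lowerBounds I) (hI : BddAbove I) :
    divisionRatios I p = Iio ((p - sInf I) / (sSup I - sInf I)) := by
  have length_pos : 0 < sSup I - sInf I :=
    sub_pos.2 (sInf_lt_sSup_of_isOpen hIo hIne ⟨p, hp⟩ hI)
  have bound_nonpos : (p - sInf I) / (sSup I - sInf I) ≤ 0 :=
    div_nonpos_of_nonpos_of_nonneg (sub_nonpos.2 (le_csInf hIne hp)) length_pos.le
  have lt_bound_iff (lam : ℝ) : (1 - lam) * sInf I + lam * sSup I < p ↔
      lam < (p - sInf I) / (sSup I - sInf I) := by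
    rw [lt_div_iff₀ length_pos, lt_sub_iff_add_lt]
    ring_nf
  ext lam
  rw [mem_divisionRatios_iff_of_subset_Ioi hIc (subset_Ioi_of_isOpen_of_mem_lowerBounds hIo hp),
    mem_Iio, ← lt_bound_iff]
  constructor
  · rintro ⟨hlam, h⟩
    exact (exists_affineComb_le_iff hIo hIne ⟨p, hp⟩ hI hlam).1 h
  · intro h
    have hlam : lam < 0 := ((lt_bound_iff lam).1 h).trans_le bound_nonpos
    exact ⟨hlam, (exists_affineComb_le_iff hIo hIne ⟨p, hp⟩ hI hlam).2 h⟩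

lemma divisionRatios_of_mem_upperBounds_of_not_bddBelow (hIo : IsOpen I) (hIc : I.OrdConnected)
    (hIne : I.Nonempty) (hp : p ∈ upperBounds I) (hI : ¬BddBelow I) :
    divisionRatios I p = Ioi 1 := by
  rw [divisionRatios_eq_preimage_neg, divisionRatios_of_mem_lowerBounds_of_not_bddAbove hIo.neg
    (hIc.preimage_anti fun _ _ => neg_le_neg) hIne.neg (neg_mem_lowerBounds_neg hp)
    (by simpa using hI), preimage_const_sub_Iio, sub_zero]

lemma divisionRatios_of_mem_upperBounds_of_bddBelow (hIo : IsOpen I) (hIc : I.OrdConnected)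
    (hIne : I.Nonempty) (hp : p ∈ upperBounds I) (hI : BddBelow I) :
    divisionRatios I p = Ioi (1 + (p - sSup I) / (sSup I - sInf I)) := by
  rw [divisionRatios_eq_preimage_neg, divisionRatios_of_mem_lowerBounds_of_bddAbove hIo.neg
    (hIc.preimage_anti fun _ _ => neg_le_neg) hIne.neg (neg_mem_lowerBounds_neg hp) hI.neg,
    preimage_const_sub_Iio, Real.sInf_neg, Real.sSup_neg]
  congr 1
  ring

theorem divisionRatios_eq_Jset (hIo : IsOpen I) (hIc : I.OrdConnected) (hIne : I.Nonempty)
    (p : ℝ) : divisionRatios I p = Jset I p := by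
  unfold Jset
  split_ifs with hp hlower habove hbelow
  · exact divisionRatios_eq_univ (hIo.mem_nhds hp)
  · exact divisionRatios_of_mem_lowerBounds_of_bddAbove hIo hIc hIne hlower habove
  · exact divisionRatios_of_mem_lowerBounds_of_not_bddAbove hIo hIc hIne hlower habove
  · exact divisionRatios_of_mem_upperBounds_of_bddBelow hIo hIc hIne
      (mem_upperBounds_of_notMem_of_notMem_lowerBounds hIc hp hlower) hbelow
  · exact divisionRatios_of_mem_upperBounds_of_not_bddBelow hIo hIc hIne
      (mem_upperBounds_of_notMem_of_notMem_lowerBounds hIc hp hlower) hbelow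

end DivisionRatios

-- Homogeneity makes `g` a multiple of `|u| ^ α` on each side of `0`, and `α ≥ 0`, so `g` is Borel
-- and locally bounded: the integrals below are never junk values.
theorem stmt4_general (I : Set ℝ) (hIo : IsOpen I) (hIc : I.OrdConnected) (hIne : I.Nonempty)
    (p : ℝ) (α : NNReal) (g : ℝ → ℝ) (hg : ∀ c > 0, ∀ u, g (c * u) = c ^ (α : ℝ) * g u)
    (μ : SignedMeasure ℝ) :
    (∀ x ∈ I, ∀ y ∈ I, x < y → 0 ≤ sInt μ (Icc 0 1) (fun t => g ((1 - t) * x + t * y - p))) ↔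
      ∀ lam ∈ Jset I p, 0 ≤ sInt μ (Icc 0 1) (fun t => g (t - lam)) := by
  have nonneg_iff {x y lam : ℝ} (hxy : x < y) (hp : (1 - lam) * x + lam * y = p) :
      0 ≤ sInt μ (Icc 0 1) (fun t => g ((1 - t) * x + t * y - p)) ↔
        0 ≤ sInt μ (Icc 0 1) (fun t => g (t - lam)) :=
    sInt_comp_affine_nonneg_iff μ _ (Real.rpow_pos_of_pos (sub_pos.2 hxy) α)
      (hg _ (sub_pos.2 hxy)) hp
  rw [← divisionRatios_eq_Jset hIo hIc hIne p]
  constructor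
  · rintro h lam ⟨x, hx, y, hy, hxy, hp⟩
    exact (nonneg_iff hxy hp).1 (h x hx y hy hxy)
  · intro h x hx y hy hxy
    obtain ⟨lam, hp⟩ := exists_affineComb_eq hxy.ne p
    exact (nonneg_iff hxy hp).2 (h lam ⟨x, hx, y, hy, hxy, hp⟩)

theorem stmt4 (I : Set ℝ) (hIo : IsOpen I) (hIc : I.OrdConnected) (hIne : I.Nonempty)
    (p : ℝ) (n : ℕ) (μ : MeasureTheory.SignedMeasure ℝ) :
    (∀ x ∈ I, ∀ y ∈ I, x < y →
        0 ≤ sInt μ (Icc 0 1) (fun t => ((1 - t) * x + t * y - p) ^ n)) ↔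
      ∀ lam ∈ Jset I p, 0 ≤ muK μ n lam := by
  simpa only [muK] using stmt4_general I hIo hIc hIne p n (· ^ n)
    (fun c _ u => by simp [mul_pow]) μ
end

section
/- Let I ⊆ ℝ be a nonempty open interval, p ∈ I, and n, k ∈ ℕ∪{0} with 0 ≤ k < n and n−k even. Then the function φ_{p,n}(u) = (u−p)^n is k-increasing on I but not k-decreasing on I. -/
open MeasureTheory Set

/-!
A polynomial and its interpolant at `k + 1` nodes differ by a polynomial with `k + 1` real roots, so
by Rolle's theorem their `k`-th derivatives agree somewhere: every divided difference of order `k`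
of a polynomial is one of the values of its `k`-th derivative, divided by `k!`. For `(u - p) ^ n`
that derivative is a nonnegative multiple of the even power `(u - p) ^ (n - k)`.

If the function were also `k`-decreasing, all its divided differences of order `k` would vanish.
By Newton's interpolation formula it would then agree on `I` with a polynomial of degree less than
`k`, which is impossible because `I` is infinite and `k ≤ n`.
-/

section

open Polynomial

variable {k : ℕ}

theorem divDiff_neg (f : ℝ → ℝ) (x : Fin (k + 1) → ℝ) :
    divDiff (fun u => -f u) k x = -divDiff f k x := by
  simp [divDiff, neg_div]

theorem divDiff_eq_zero_of_nIncreasingOn_of_nDecreasingOn {f : ℝ → ℝ} {I : Set ℝ}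
    (hinc : nIncreasingOn f I k) (hdec : nDecreasingOn f I k) {x : Fin (k + 1) → ℝ}
    (hx : Function.Injective x) (hxI : ∀ j, x j ∈ I) : divDiff f k x = 0 := by
  have hneg : 0 ≤ -divDiff f k x := divDiff_neg f x ▸ hdec x hx hxI
  exact le_antisymm (neg_nonneg.mp hneg) (hinc x hx hxI)

/-- The Lagrange interpolation polynomial of `f` at the nodes `x 0, …, x (m - 1)`: for distinct
nodes, the unique polynomial of degree less than `m` agreeing with `f` there. Its coefficient of
degree `m - 1` is the divided difference of `f` at the nodes. -/
noncomputable def interpolant (f : ℝ → ℝ) {m : ℕ} (x : Fin m → ℝ) : ℝ[X] :=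
  Lagrange.interpolate Finset.univ x (f ∘ x)

theorem degree_interpolant_lt (f : ℝ → ℝ) {m : ℕ} {x : Fin m → ℝ} (hx : Function.Injective x) :
    (interpolant f x).degree < m := by
  simpa only [interpolant, Finset.card_univ, Fintype.card_fin] using
    Lagrange.degree_interpolate_lt (s := Finset.univ) (f ∘ x) hx.injOn

theorem eval_interpolant (f : ℝ → ℝ) {m : ℕ} {x : Fin m → ℝ} (hx : Function.Injective x)
    (j : Fin m) : (interpolant f x).eval (x j) = f (x j) :=
  Lagrange.eval_interpolate_at_node (f ∘ x) hx.injOn (Finset.mem_univ j)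

theorem eq_interpolant {f : ℝ → ℝ} {m : ℕ} {x : Fin m → ℝ} (hx : Function.Injective x) {P : ℝ[X]}
    (hdeg : P.degree < m) (heval : ∀ j, P.eval (x j) = f (x j)) : P = interpolant f x :=
  Lagrange.eq_interpolate_of_eval_eq (f ∘ x) hx.injOn (by simpa using hdeg) fun j _ => heval j

theorem coeff_interpolant_eq_divDiff (f : ℝ → ℝ) {x : Fin (k + 1) → ℝ}
    (hx : Function.Injective x) : (interpolant f x).coeff k = divDiff f k x := by
  have h := Lagrange.coeff_eq_sum (s := Finset.univ) hx.injOn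
    (by simpa using degree_interpolant_lt f hx)
  simpa [divDiff, eval_interpolant f hx] using h

theorem eval_iterate_derivative_interpolant (f : ℝ → ℝ) {x : Fin (k + 1) → ℝ}
    (hx : Function.Injective x) (u : ℝ) :
    (derivative^[k] (interpolant f x)).eval u = k.factorial * divDiff f k x := by
  have h := Lagrange.eval_iterate_derivative_eq_sum (s := Finset.univ) (k := k) hx.injOn
    (by simpa using degree_interpolant_lt f hx) (by simp) u
  simpa [divDiff, eval_interpolant f hx] using h

theorem card_roots_le_card_roots_iterate_derivative (P : ℝ[X]) (k : ℕ) :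
    P.roots.card ≤ (derivative^[k] P).roots.card + k := by
  induction k with
  | zero => simp
  | succ k ih =>
    rw [Function.iterate_succ_apply']
    have := card_roots_le_derivative (derivative^[k] P)
    lia

theorem exists_isRoot_iterate_derivative {P : ℝ[X]} {s : Finset ℝ} (hs : k < s.card)
    (hroot : ∀ a ∈ s, P.IsRoot a) : ∃ ξ, (derivative^[k] P).IsRoot ξ := by
  rcases eq_or_ne P 0 with rfl | hP
  · exact ⟨0, by simp⟩
  have hsub : s.val ≤ P.roots :=
    Finset.val_le_iff_val_subset.mpr fun a ha => (mem_roots hP).mpr (hroot a ha)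
  have hcard : s.card ≤ P.roots.card := Multiset.card_le_card hsub
  have hpos : 0 < (derivative^[k] P).roots.card := by
    have := card_roots_le_card_roots_iterate_derivative P k
    lia
  obtain ⟨ξ, hξ⟩ := Multiset.card_pos_iff_exists_mem.mp hpos
  exact ⟨ξ, isRoot_of_mem_roots hξ⟩

theorem exists_eval_iterate_derivative_eq_factorial_mul_divDiff (P : ℝ[X])
    {x : Fin (k + 1) → ℝ} (hx : Function.Injective x) :
    ∃ ξ, (derivative^[k] P).eval ξ = k.factorial * divDiff P.eval k x := by
  have hroot : ∀ a ∈ Finset.univ.map ⟨x, hx⟩, (P - interpolant P.eval x).IsRoot a := by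
    simp [eval_interpolant _ hx]
  obtain ⟨ξ, hξ⟩ := exists_isRoot_iterate_derivative (k := k) (by simp) hroot
  refine ⟨ξ, ?_⟩
  rw [IsRoot.def, iterate_derivative_sub, eval_sub, sub_eq_zero] at hξ
  rw [hξ, eval_iterate_derivative_interpolant P.eval hx]

theorem nIncreasingOn_eval_of_iterate_derivative_nonneg {P : ℝ[X]}
    (hP : ∀ u, 0 ≤ (derivative^[k] P).eval u) (I : Set ℝ) : nIncreasingOn P.eval I k := by
  intro x hx _
  obtain ⟨ξ, hξ⟩ := exists_eval_iterate_derivative_eq_factorial_mul_divDiff P hx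
  exact nonneg_of_mul_nonneg_right (hξ ▸ hP ξ) (by positivity)

theorem interpolant_cons_eq_add_divDiff_mul_nodal (f : ℝ → ℝ) {y : Fin k → ℝ} {z : ℝ}
    (hzy : Function.Injective (Fin.cons z y : Fin (k + 1) → ℝ)) :
    interpolant f (Fin.cons z y : Fin (k + 1) → ℝ) =
      interpolant f y + C (divDiff f k (Fin.cons z y)) * Lagrange.nodal Finset.univ y := by
  have hy : Function.Injective y := (Fin.cons_injective_iff.mp hzy).2
  set P := interpolant f (Fin.cons z y : Fin (k + 1) → ℝ) with hP
  set N := Lagrange.nodal Finset.univ y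
  have hPdeg : P.degree < (k + 1 : ℕ) := degree_interpolant_lt f hzy
  have hNdeg : N.natDegree = k := by simp [N]
  have hNcoeff : N.coeff k = 1 := hNdeg ▸ (Lagrange.nodal_monic : N.Monic).coeff_natDegree
  have hdeg : (P - C (divDiff f k (Fin.cons z y)) * N).degree < k := by
    rw [degree_lt_iff_coeff_zero]
    intro m hm
    rw [coeff_sub, coeff_C_mul]
    rcases hm.eq_or_lt with rfl | hlt
    · rw [hP, coeff_interpolant_eq_divDiff f hzy, hNcoeff, mul_one, sub_self]
    · rw [coeff_eq_zero_of_degree_lt (hPdeg.trans_le (Nat.cast_le.mpr hlt)),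
        coeff_eq_zero_of_natDegree_lt (hNdeg.trans_lt hlt), mul_zero, sub_zero]
  have heval (j : Fin k) : (P - C (divDiff f k (Fin.cons z y)) * N).eval (y j) = f (y j) := by
    have hPj : P.eval (y j) = f (y j) := eval_interpolant f hzy j.succ
    simp [hPj, N, Lagrange.eval_nodal_at_node]
  exact sub_eq_iff_eq_add.mp (eq_interpolant hy hdeg heval)

theorem eval_interpolant_of_divDiff_cons_eq_zero {f : ℝ → ℝ} {y : Fin k → ℝ} {z : ℝ}
    (hzy : Function.Injective (Fin.cons z y : Fin (k + 1) → ℝ))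
    (hzero : divDiff f k (Fin.cons z y) = 0) : (interpolant f y).eval z = f z := by
  have hnewton := interpolant_cons_eq_add_divDiff_mul_nodal f hzy
  rw [hzero, C_0, zero_mul, add_zero] at hnewton
  exact hnewton ▸ eval_interpolant f hzy 0

theorem exists_divDiff_eval_ne_zero {P : ℝ[X]} (hk : k ≤ P.degree) {I : Set ℝ}
    (hI : I.Infinite) :
    ∃ x : Fin (k + 1) → ℝ, Function.Injective x ∧ (∀ j, x j ∈ I) ∧ divDiff P.eval k x ≠ 0 := by
  obtain ⟨y, hy, hyI⟩ : ∃ y : Fin k → ℝ, Function.Injective y ∧ ∀ j, y j ∈ I := by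
    obtain ⟨s, hsI, hs⟩ := hI.exists_subset_card_eq k
    exact ⟨s.orderEmbOfFin hs, (s.orderEmbOfFin hs).injective,
      fun j => hsI (s.orderEmbOfFin_mem hs j)⟩
  have hne : P - interpolant P.eval y ≠ 0 := by
    refine sub_ne_zero.mpr fun h => ?_
    exact (degree_interpolant_lt P.eval hy).not_ge (h ▸ hk)
  obtain ⟨z, hzI, hz⟩ := hI.exists_notMem_finset (P - interpolant P.eval y).roots.toFinset
  have hzeval : P.eval z ≠ (interpolant P.eval y).eval z := by
    simpa [hne, sub_eq_zero] using hz
  have hzy : z ∉ Set.range y := by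
    rintro ⟨j, rfl⟩
    exact hzeval (eval_interpolant P.eval hy j).symm
  have hx : Function.Injective (Fin.cons z y : Fin (k + 1) → ℝ) :=
    Fin.cons_injective_iff.mpr ⟨hzy, hy⟩
  exact ⟨Fin.cons z y, hx, Fin.cases hzI hyI, fun hzero =>
    hzeval (eval_interpolant_of_divDiff_cons_eq_zero hx hzero).symm⟩

theorem not_nDecreasingOn_eval_of_nIncreasingOn {P : ℝ[X]} (hk : k ≤ P.degree) {I : Set ℝ}
    (hI : I.Infinite) (hinc : nIncreasingOn P.eval I k) : ¬ nDecreasingOn P.eval I k := by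
  intro hdec
  obtain ⟨x, hx, hxI, hne⟩ := exists_divDiff_eval_ne_zero hk hI
  exact hne (divDiff_eq_zero_of_nIncreasingOn_of_nDecreasingOn hinc hdec hx hxI)

theorem eval_iterate_derivative_X_sub_C_pow_nonneg (p : ℝ) {n k : ℕ} (hpar : Even (n - k))
    (u : ℝ) : 0 ≤ (derivative^[k] ((X - C p) ^ n)).eval u := by
  rw [iterate_derivative_X_sub_pow]
  simpa using mul_nonneg (Nat.cast_nonneg _) (hpar.pow_nonneg (u - p))

theorem stmt9_general {I : Set ℝ} (hI : I.Infinite) (p : ℝ) {n k : ℕ} (hkn : k ≤ n)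
    (hpar : Even (n - k)) :
    nIncreasingOn (fun u => (u - p) ^ n) I k ∧
      ¬ nDecreasingOn (fun u => (u - p) ^ n) I k := by
  have heval : (fun u => (u - p) ^ n) = ((X - C p) ^ n : ℝ[X]).eval := by
    ext u
    simp
  have hdeg : (k : WithBot ℕ) ≤ ((X - C p) ^ n : ℝ[X]).degree := by simpa using hkn
  rw [heval]
  have hinc := nIncreasingOn_eval_of_iterate_derivative_nonneg
    (eval_iterate_derivative_X_sub_C_pow_nonneg p hpar) I
  exact ⟨hinc, not_nDecreasingOn_eval_of_nIncreasingOn hdeg hI hinc⟩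

end

theorem stmt9 (I : Set ℝ) (hIo : IsOpen I) (hIc : I.OrdConnected) (hIne : I.Nonempty)
    (p : ℝ) (hp : p ∈ I) (n k : ℕ) (hkn : k < n) (hpar : Even (n - k)) :
    nIncreasingOn (fun u => (u - p) ^ n) I k ∧
      ¬ nDecreasingOn (fun u => (u - p) ^ n) I k :=
  stmt9_general (infinite_of_mem_nhds p (hIo.mem_nhds hp)) p hkn.le hpar
end

section
/- Let I ⊆ ℝ be a nonempty open interval, p ∈ I, and n, k ∈ ℕ∪{0}. If 0 ≤ k ≤ n+1, then the function φ⁺_{p,n} restricted to I is k-increasing but not k-decreasing on I; if k > n+1, then φ⁺_{p,n} restricted to I is neither k-increasing nor k-decreasing on I. -/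
open MeasureTheory Set

/-!
Divided differences are symmetric in their nodes, so they are functions of finite sets of nodes.
Since `φ⁺_{p,n+1}(u) = (u - p) φ⁺_{p,n}(u)`, the Leibniz rule expresses the divided differences of
`φ⁺_{p,n+1}` by those of `φ⁺_{p,n}`; with nodes `b ≤ p < a` this is the recurrence of Cox and de
Boor for B-splines, whose coefficients are nonnegative. Induction on `n` then gives the positive
result, starting from the monotonicity of `φ⁺_{p,0}`.

For the negative results, `φ⁺_{p,n}` is homogeneous about `p`, so that a neighbourhood of `p` may be
replaced by the whole line. If `L` is a set of nodes in `(-∞, p]` and `u > p`, then the divided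
difference at `L ∪ {u}` is `(u - p)^n / ∏ t ∈ L, (u - t)`, which is positive, but tends to `0` as
`u → ∞` if `n < #L`. Hence its values at some `b < a` decrease, and the divided difference at
`L ∪ {a, b}` is negative.
-/

open Finset Polynomial Topology

section DividedDifference

variable {K : Type*} [Field K] [DecidableEq K]

/-- The divided difference of `f` at a finite set `S` of nodes, of order `#S - 1`. Indexing by sets
instead of tuples lets nodes be inserted and erased without reindexing;
`divDiff_eq_dividedDifference` relates it to `divDiff`. -/
def dividedDifference (f : K → K) (S : Finset K) : K :=
  ∑ a ∈ S, f a / ∏ b ∈ S.erase a, (a - b)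

@[simp]
lemma dividedDifference_singleton (f : K → K) (a : K) : dividedDifference f {a} = f a := by
  simp [dividedDifference]

lemma dividedDifference_congr {f g : K → K} {S : Finset K} (h : Set.EqOn f g S) :
    dividedDifference f S = dividedDifference g S :=
  sum_congr rfl fun a ha ↦ by rw [h ha]

lemma dividedDifference_neg (f : K → K) (S : Finset K) :
    dividedDifference (fun u ↦ -f u) S = -dividedDifference f S := by
  simp only [dividedDifference, neg_div, sum_neg_distrib]

lemma dividedDifference_insert_of_eqOn_zero {f : K → K} {S : Finset K} {a : K} (ha : a ∉ S)
    (hf : Set.EqOn f 0 S) :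
    dividedDifference f (insert a S) = f a / ∏ b ∈ S, (a - b) := by
  have hS : ∑ c ∈ S, f c / ∏ b ∈ (insert a S).erase c, (c - b) = 0 :=
    sum_eq_zero fun c hc ↦ by rw [hf hc, Pi.zero_apply, zero_div]
  rw [dividedDifference, sum_insert ha, hS, add_zero, erase_insert ha]

lemma dividedDifference_eval_eq_zero {P : K[X]} {S : Finset K} (hP : P.natDegree + 1 < #S) :
    dividedDifference P.eval S = 0 := by
  have hdeg : P.degree < #S :=
    degree_le_natDegree.trans_lt (Nat.cast_lt.2 (by lia))
  exact (Lagrange.coeff_eq_sum (Set.injOn_id _) hdeg).symm.trans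
    (coeff_eq_zero_of_natDegree_lt (by lia))

lemma dividedDifference_sub_mul_of_mem (f : K → K) {S : Finset K} {a : K} (ha : a ∈ S) :
    dividedDifference (fun u ↦ (u - a) * f u) S = dividedDifference f (S.erase a) := by
  rw [dividedDifference, ← add_sum_erase _ _ ha, sub_self, zero_mul, zero_div, zero_add]
  refine sum_congr rfl fun u hu ↦ ?_
  have hua : u ≠ a := ne_of_mem_erase hu
  have ha' : a ∈ S.erase u := mem_erase.2 ⟨hua.symm, ha⟩
  rw [← mul_prod_erase _ _ ha', erase_right_comm, mul_div_mul_left _ _ (sub_ne_zero.2 hua)]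

lemma dividedDifference_sub_mul (f : K → K) {S : Finset K} (c : K) {a : K} (ha : a ∈ S) :
    dividedDifference (fun u ↦ (u - c) * f u) S =
      (a - c) * dividedDifference f S + dividedDifference f (S.erase a) := by
  rw [← dividedDifference_sub_mul_of_mem f ha, dividedDifference, dividedDifference,
    dividedDifference, mul_sum, ← sum_add_distrib]
  exact sum_congr rfl fun u _ ↦ by ring

lemma sub_mul_dividedDifference (f : K → K) {S : Finset K} {a b : K} (ha : a ∈ S) (hb : b ∈ S) :
    (a - b) * dividedDifference f S =
      dividedDifference f (S.erase b) - dividedDifference f (S.erase a) := by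
  linear_combination dividedDifference_sub_mul f 0 hb - dividedDifference_sub_mul f 0 ha

lemma sub_mul_dividedDifference_insert_insert (f : K → K) {S : Finset K} {a b : K} (ha : a ∉ S)
    (hb : b ∉ S) (hab : a ≠ b) :
    (a - b) * dividedDifference f (insert a (insert b S)) =
      dividedDifference f (insert a S) - dividedDifference f (insert b S) := by
  rw [sub_mul_dividedDifference f (mem_insert_self a _)
      (mem_insert_of_mem (mem_insert_self b S)),
    erase_insert_of_ne hab, erase_insert hb, erase_insert (by simp [hab, ha])]

lemma sub_mul_dividedDifference_sub_mul (f : K → K) {S : Finset K} (c : K) {a b : K} (ha : a ∈ S)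
    (hb : b ∈ S) :
    (a - b) * dividedDifference (fun u ↦ (u - c) * f u) S =
      (a - c) * dividedDifference f (S.erase b) + (c - b) * dividedDifference f (S.erase a) := by
  linear_combination (a - c) * dividedDifference_sub_mul f c hb +
    (c - b) * dividedDifference_sub_mul f c ha

lemma dividedDifference_pair (f : K → K) {a b : K} (hab : a ≠ b) :
    dividedDifference f {a, b} = slope f a b := by
  have h := sub_mul_dividedDifference_insert_insert f (notMem_empty a) (notMem_empty b) hab
  rw [insert_empty_eq, insert_empty_eq, dividedDifference_singleton, dividedDifference_singleton]
    at h
  rw [slope_comm, slope_def_field, eq_div_iff (sub_ne_zero.2 hab), mul_comm, h]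

end DividedDifference

section NIncreasing

lemma divDiff_eq_dividedDifference (f : ℝ → ℝ) {k : ℕ} {x : Fin (k + 1) → ℝ}
    (hx : Function.Injective x) : divDiff f k x = dividedDifference f (univ.image x) := by
  rw [divDiff, dividedDifference, sum_image hx.injOn]
  refine sum_congr rfl fun j _ ↦ ?_
  rw [← image_erase hx, prod_image hx.injOn]

lemma nIncreasingOn_iff {f : ℝ → ℝ} {I : Set ℝ} {k : ℕ} :
    nIncreasingOn f I k ↔ ∀ S : Finset ℝ, #S = k + 1 → ↑S ⊆ I → 0 ≤ dividedDifference f S := by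
  constructor
  · intro h S hS hSI
    have hinj := (S.orderEmbOfFin hS).injective
    have hnonneg := h (S.orderEmbOfFin hS) hinj fun j ↦ hSI (S.orderEmbOfFin_mem hS j)
    rwa [divDiff_eq_dividedDifference f hinj, image_orderEmbOfFin_univ] at hnonneg
  · intro h x hx hxI
    rw [divDiff_eq_dividedDifference f hx]
    refine h _ ?_ ?_
    · rw [card_image_of_injective _ hx, card_univ, Fintype.card_fin]
    · rw [coe_image, coe_univ, Set.image_univ]
      exact Set.range_subset_iff.2 hxI

lemma nDecreasingOn_iff {f : ℝ → ℝ} {I : Set ℝ} {k : ℕ} :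
    nDecreasingOn f I k ↔ ∀ S : Finset ℝ, #S = k + 1 → ↑S ⊆ I → dividedDifference f S ≤ 0 := by
  simp only [nDecreasingOn, nIncreasingOn_iff, dividedDifference_neg, Left.nonneg_neg_iff]

lemma divDiff_homothety (f : ℝ → ℝ) {k : ℕ} (x : Fin (k + 1) → ℝ) (p ε : ℝ) :
    divDiff f k (fun j ↦ p + ε * (x j - p)) =
      (ε ^ k)⁻¹ * divDiff (fun u ↦ f (p + ε * (u - p))) k x := by
  rw [divDiff, divDiff, mul_sum]
  refine sum_congr rfl fun j _ ↦ ?_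
  have hprod : ∏ i ∈ univ.erase j, (p + ε * (x j - p) - (p + ε * (x i - p))) =
      ε ^ k * ∏ i ∈ univ.erase j, (x j - x i) :=
    calc
      _ = ∏ i ∈ univ.erase j, ε * (x j - x i) := prod_congr rfl fun i _ ↦ by ring
      _ = _ := by
        rw [prod_mul_distrib, prod_const, card_erase_of_mem (mem_univ j), card_univ,
          Fintype.card_fin, Nat.add_sub_cancel]
  rw [hprod, div_mul_eq_div_div_swap, div_eq_inv_mul]

lemma divDiff_const_mul (c : ℝ) (f : ℝ → ℝ) {k : ℕ} (x : Fin (k + 1) → ℝ) :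
    divDiff (fun u ↦ c * f u) k x = c * divDiff f k x := by
  simp only [divDiff, mul_sum, mul_div_assoc]

lemma nIncreasingOn_univ_of_homogeneous {f : ℝ → ℝ} {p : ℝ} {n : ℕ}
    (hf : ∀ ε > 0, ∀ u, f (p + ε * (u - p)) = ε ^ n * f u) {I : Set ℝ} (hI : I ∈ 𝓝 p) {k : ℕ}
    (h : nIncreasingOn f I k) : nIncreasingOn f Set.univ k := by
  intro x hx _
  have hlim (j : Fin (k + 1)) : ContinuousAt (fun ε : ℝ ↦ p + ε * (x j - p)) 0 := by fun_prop
  have hmem : ∀ᶠ ε in 𝓝[>] (0 : ℝ), ∀ j, p + ε * (x j - p) ∈ I :=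
    nhdsWithin_le_nhds <| Filter.eventually_all.2 fun j ↦
      (hlim j).eventually_mem (by simpa using hI)
  obtain ⟨ε, hεI, hε⟩ := (hmem.and self_mem_nhdsWithin).exists
  have hε : 0 < ε := hε
  have hinj : Function.Injective fun j ↦ p + ε * (x j - p) := fun i j hij ↦
    hx (sub_left_injective (mul_left_cancel₀ hε.ne' (add_left_cancel hij)))
  have hnonneg := h _ hinj hεI
  simp only [divDiff_homothety, hf ε hε, divDiff_const_mul] at hnonneg
  rwa [mul_nonneg_iff_of_pos_left (by positivity), mul_nonneg_iff_of_pos_left (by positivity)]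
    at hnonneg

end NIncreasing

section PhiPlus

variable {p : ℝ}

lemma phiPlus_of_lt {u : ℝ} (n : ℕ) (h : p < u) : phiPlus p n u = (u - p) ^ n := by
  rcases eq_or_ne n 0 with rfl | hn
  · rw [phiPlus, if_pos rfl, if_pos h, pow_zero]
  · rw [phiPlus, if_neg hn, max_eq_right (sub_nonneg.2 h.le)]

lemma phiPlus_of_le {u : ℝ} (n : ℕ) (h : u ≤ p) : phiPlus p n u = 0 := by
  rcases eq_or_ne n 0 with rfl | hn
  · rw [phiPlus, if_pos rfl, if_neg h.not_gt]
  · rw [phiPlus, if_neg hn, max_eq_left (sub_nonpos.2 h), zero_pow hn]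

lemma phiPlus_succ (p : ℝ) (n : ℕ) : phiPlus p (n + 1) = fun u ↦ (u - p) * phiPlus p n u := by
  funext u
  rcases lt_or_ge p u with h | h
  · rw [phiPlus_of_lt _ h, phiPlus_of_lt _ h, pow_succ']
  · rw [phiPlus_of_le _ h, phiPlus_of_le _ h, mul_zero]

lemma phiPlus_nonneg (p : ℝ) (n : ℕ) (u : ℝ) : 0 ≤ phiPlus p n u := by
  rcases lt_or_ge p u with h | h
  · rw [phiPlus_of_lt n h]
    exact pow_nonneg (sub_nonneg.2 h.le) n
  · rw [phiPlus_of_le n h]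

lemma monotone_phiPlus (p : ℝ) (n : ℕ) : Monotone (phiPlus p n) := by
  intro u v huv
  rcases lt_or_ge p u with h | h
  · rw [phiPlus_of_lt n h, phiPlus_of_lt n (h.trans_le huv)]
    exact pow_le_pow_left₀ (sub_nonneg.2 h.le) (sub_le_sub_right huv p) n
  · rw [phiPlus_of_le n h]
    exact phiPlus_nonneg p n v

lemma phiPlus_homothety (p : ℝ) (n : ℕ) {ε : ℝ} (hε : 0 < ε) (u : ℝ) :
    phiPlus p n (p + ε * (u - p)) = ε ^ n * phiPlus p n u := by
  rcases lt_or_ge p u with h | h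
  · have h' : p < p + ε * (u - p) := lt_add_of_pos_right p (mul_pos hε (sub_pos.2 h))
    rw [phiPlus_of_lt n h, phiPlus_of_lt n h', add_sub_cancel_left, mul_pow]
  · have h' : p + ε * (u - p) ≤ p :=
      add_le_of_nonpos_right (mul_nonpos_of_nonneg_of_nonpos hε.le (sub_nonpos.2 h))
    rw [phiPlus_of_le n h, phiPlus_of_le n h', mul_zero]

lemma dividedDifference_phiPlus_eq_zero {n : ℕ} {S : Finset ℝ} (hS : n + 1 < #S)
    (hp : ∀ u ∈ S, p < u) : dividedDifference (phiPlus p n) S = 0 := by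
  have hpow : Set.EqOn (phiPlus p n) ((X - C p) ^ n).eval S := fun u hu ↦ by
    rw [phiPlus_of_lt n (hp u hu), eval_pow, eval_sub, eval_X, eval_C]
  rw [dividedDifference_congr hpow]
  exact dividedDifference_eval_eq_zero (by rwa [natDegree_pow, natDegree_X_sub_C, mul_one])

lemma dividedDifference_phiPlus_zero_nonneg {S : Finset ℝ} (hS : #S ≤ 2) :
    0 ≤ dividedDifference (phiPlus p 0) S := by
  obtain h | h | h : #S = 0 ∨ #S = 1 ∨ #S = 2 := by lia
  · rw [card_eq_zero.1 h, dividedDifference, sum_empty]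
  · obtain ⟨a, rfl⟩ := card_eq_one.1 h
    rw [dividedDifference_singleton]
    exact phiPlus_nonneg p 0 a
  · obtain ⟨a, b, hab, rfl⟩ := card_eq_two.1 h
    rw [dividedDifference_pair _ hab]
    exact ((monotone_phiPlus p 0).monotoneOn Set.univ).slope_nonneg trivial trivial

lemma dividedDifference_phiPlus_nonneg (n : ℕ) {S : Finset ℝ} (hS : #S ≤ n + 2) :
    0 ≤ dividedDifference (phiPlus p n) S := by
  induction n generalizing S with
  | zero => exact dividedDifference_phiPlus_zero_nonneg hS
  | succ n ih =>
    by_cases hright : ∃ a ∈ S, p < a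
    · obtain ⟨a, ha, hpa⟩ := hright
      have hSa := card_erase_add_one ha
      have ih_a := ih (S := S.erase a) (by lia)
      obtain hcard | hcard : #S ≤ n + 2 ∨ #S = n + 3 := by lia
      · rw [phiPlus_succ, dividedDifference_sub_mul _ p ha]
        exact add_nonneg (mul_nonneg (sub_nonneg.2 hpa.le) (ih hcard)) ih_a
      by_cases hleft : ∃ b ∈ S, b ≤ p
      · obtain ⟨b, hb, hbp⟩ := hleft
        have hSb := card_erase_add_one hb
        have ih_b := ih (S := S.erase b) (by lia)
        refine nonneg_of_mul_nonneg_right ?_ (sub_pos.2 (hbp.trans_lt hpa))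
        rw [phiPlus_succ, sub_mul_dividedDifference_sub_mul _ p ha hb]
        exact add_nonneg (mul_nonneg (sub_nonneg.2 hpa.le) ih_b)
          (mul_nonneg (sub_nonneg.2 hbp) ih_a)
      · push Not at hleft
        exact (dividedDifference_phiPlus_eq_zero (by lia) hleft).ge
    · push Not at hright
      exact sum_nonneg fun a ha ↦ by rw [phiPlus_of_le _ (hright a ha), zero_div]

lemma dividedDifference_phiPlus_insert (n : ℕ) {L : Finset ℝ} (hL : ↑L ⊆ Set.Iic p) {a : ℝ}
    (ha : p < a) :
    dividedDifference (phiPlus p n) (insert a L) = (a - p) ^ n / ∏ t ∈ L, (a - t) := by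
  rw [dividedDifference_insert_of_eqOn_zero (fun h ↦ (hL h).not_gt ha)
    fun t ht ↦ phiPlus_of_le n (hL ht), phiPlus_of_lt n ha]

lemma not_nDecreasingOn_univ_phiPlus (p : ℝ) (n k : ℕ) :
    ¬ nDecreasingOn (phiPlus p n) Set.univ k := by
  obtain ⟨L, hL, hLk⟩ := (Set.Iic_infinite p).exists_subset_card_eq k
  have hlt (t : ℝ) (ht : t ∈ L) : t < p + 1 := (hL ht).trans_lt (lt_add_one p)
  rw [nDecreasingOn_iff]
  intro h
  refine (h (insert (p + 1) L) ?_ (Set.subset_univ _)).not_gt ?_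
  · rw [card_insert_of_notMem fun h ↦ (hlt _ h).false, hLk]
  · rw [dividedDifference_phiPlus_insert n hL (lt_add_one p), add_sub_cancel_left, one_pow]
    exact one_div_pos.2 (prod_pos fun t ht ↦ sub_pos.2 (hlt t ht))

lemma exists_dividedDifference_phiPlus_insert_lt {n : ℕ} {L : Finset ℝ} (hL : ↑L ⊆ Set.Iic p)
    (hn : n < #L) :
    ∃ a > p + 1, dividedDifference (phiPlus p n) (insert a L) <
      dividedDifference (phiPlus p n) (insert (p + 1) L) := by
  set M := ∏ t ∈ L, (p + 1 - t)
  have hM : 1 ≤ M := one_le_prod fun t ht ↦ by linarith [Set.mem_Iic.1 (hL ht)]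
  refine ⟨p + (M + 1), by linarith, ?_⟩
  have hpow : (M + 1) ^ (n + 1) ≤ ∏ t ∈ L, (p + (M + 1) - t) :=
    calc
      (M + 1) ^ (n + 1) ≤ (M + 1) ^ #L := pow_le_pow_right₀ (by linarith) hn
      _ = ∏ _t ∈ L, (M + 1) := (prod_const _).symm
      _ ≤ ∏ t ∈ L, (p + (M + 1) - t) :=
        prod_le_prod (fun t _ ↦ by linarith) fun t ht ↦ by linarith [Set.mem_Iic.1 (hL ht)]
  rw [dividedDifference_phiPlus_insert n hL (by linarith),
    dividedDifference_phiPlus_insert n hL (lt_add_one p), add_sub_cancel_left, add_sub_cancel_left,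
    one_pow]
  calc
    (M + 1) ^ n / ∏ t ∈ L, (p + (M + 1) - t) ≤ (M + 1) ^ n / (M + 1) ^ (n + 1) := by gcongr
    _ = 1 / (M + 1) := by rw [pow_succ]; field_simp
    _ < 1 / M := one_div_lt_one_div_of_lt (by linarith) (lt_add_one M)

lemma not_nIncreasingOn_univ_phiPlus (p : ℝ) {n k : ℕ} (hk : n + 1 < k) :
    ¬ nIncreasingOn (phiPlus p n) Set.univ k := by
  obtain ⟨m, rfl⟩ : ∃ m, k = m + 1 := ⟨k - 1, by lia⟩
  obtain ⟨L, hL, hLm⟩ := (Set.Iic_infinite p).exists_subset_card_eq m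
  obtain ⟨a, ha, hlt⟩ := exists_dividedDifference_phiPlus_insert_lt hL (n := n) (by lia)
  have hbL : p + 1 ∉ L := fun h ↦ (hL h).not_gt (lt_add_one p)
  have haL : a ∉ L := fun h ↦ (hL h).not_gt ((lt_add_one p).trans ha)
  have ha' : a ∉ insert (p + 1) L := by
    simpa [ha.ne'] using haL
  rw [nIncreasingOn_iff]
  intro h
  have hnonneg := h (insert a (insert (p + 1) L))
    (by rw [card_insert_of_notMem ha', card_insert_of_notMem hbL, hLm]) (Set.subset_univ _)
  have hrec := sub_mul_dividedDifference_insert_insert (phiPlus p n) haL hbL ha.ne'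
  linarith [mul_nonneg (sub_nonneg.2 ha.le) hnonneg]

lemma nIncreasingOn_phiPlus_iff {I : Set ℝ} (hI : I ∈ 𝓝 p) (n k : ℕ) :
    nIncreasingOn (phiPlus p n) I k ↔ k ≤ n + 1 := by
  constructor
  · intro h
    by_contra! hk
    exact not_nIncreasingOn_univ_phiPlus p hk
      (nIncreasingOn_univ_of_homogeneous (fun _ ↦ phiPlus_homothety p n) hI h)
  · intro hk
    rw [nIncreasingOn_iff]
    exact fun S hS _ ↦ dividedDifference_phiPlus_nonneg n (by lia)

lemma not_nDecreasingOn_phiPlus {I : Set ℝ} (hI : I ∈ 𝓝 p) (n k : ℕ) :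
    ¬ nDecreasingOn (phiPlus p n) I k := fun h ↦
  not_nDecreasingOn_univ_phiPlus p n k <| nIncreasingOn_univ_of_homogeneous
    (fun ε hε u ↦ by rw [phiPlus_homothety p n hε, mul_neg]) hI h

end PhiPlus

theorem stmt13_general {I : Set ℝ} {p : ℝ} (hI : I ∈ 𝓝 p) (n k : ℕ) :
    (nIncreasingOn (phiPlus p n) I k ↔ k ≤ n + 1) ∧ ¬ nDecreasingOn (phiPlus p n) I k :=
  ⟨nIncreasingOn_phiPlus_iff hI n k, not_nDecreasingOn_phiPlus hI n k⟩

theorem stmt13 (I : Set ℝ) (hIo : IsOpen I) (hIc : I.OrdConnected) (hIne : I.Nonempty)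
    (p : ℝ) (hp : p ∈ I) (n k : ℕ) :
    (k ≤ n + 1 → nIncreasingOn (phiPlus p n) I k ∧ ¬ nDecreasingOn (phiPlus p n) I k) ∧
    (n + 1 < k → ¬ nIncreasingOn (phiPlus p n) I k ∧ ¬ nDecreasingOn (phiPlus p n) I k) := by
  obtain ⟨hinc, hdec⟩ := stmt13_general (hIo.mem_nhds hp) n k
  exact ⟨fun hk ↦ ⟨hinc.2 hk, hdec⟩, fun hk ↦ ⟨fun h ↦ hk.not_ge (hinc.1 h), hdec⟩⟩
end
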